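/- arXiv:1710.11400 — 2 statements merged into one kernel-verified Lean document; each statement's English description precedes it below -/
import Mathlib

section
/- Every noncommutatively G-graded Lie algebra over a field has a universal G-graded enveloping algebra. -/
universe u v w x

/-- A unital associative `G`-graded `k`-algebra. -/
structure GradedAlg (k : Type u) (G : Type v) [Field k] [Group G] [DecidableEq G] where
  carrier : Type x
  [ring : Ring carrier]
  [alg : Algebra k carrier]
  grading : G → Submodule k carrier
  internal : DirectSum.IsInternal grading
  one_mem : (1 : carrier) ∈ grading 1
  mul_mem : ∀ g h : G, ∀ a ∈ grading g, ∀ b ∈ grading h, a * b ∈ grading (g * h)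

attribute [instance] GradedAlg.ring GradedAlg.alg

/-!
The grading forces extra relations. Let `a ∈ L_g`, `b ∈ L_h` with `gh ≠ hg`, and let `c` be the
component of `⁅a, b⁆` in degree `gh`. For a graded Lie morphism `j` into a graded algebra, comparing
the components of degree `gh` in `j ⁅a, b⁆ = j a * j b - j b * j a` gives `j a * j b = j c`.
Let `U` be the quotient of the ordinary enveloping algebra by all relations `a * b = c` of this
kind, with `ι : L → U` the canonical map. Its universal property is immediate, and the point is to
grade it. The relations split the bracket identity into its homogeneous components, so
`l ↦ ι l ⊗ g` for `l ∈ L_g` defines a Lie morphism `L → U[G]`; it respects the relations as well and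
hence extends to an algebra morphism `ρ : U → U[G]`. The pieces `U_g = {u | ρ u = u ⊗ g}` are
independent, and they span because they are compatible with products and contain the generators.
Applied to the pieces `U_g ∩ f⁻¹(A_g)`, the same spanning argument shows that the morphism
`f : U → A` induced by `j : L → A` is graded.
-/

section MulGraded

variable {k G A : Type*} [Monoid G] [CommSemiring k]

/-- A family of submodules of an algebra, indexed by a monoid written multiplicatively, that is
compatible with the unit and with products. This is the counterpart of `SetLike.GradedMonoid`,
which requires an additive index; no direct sum decomposition is assumed. -/
structure IsMulGraded [Semiring A] [Algebra k A] (𝒜 : G → Submodule k A) : Prop where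
  one_mem : (1 : A) ∈ 𝒜 1
  mul_mem : ∀ g h : G, ∀ a ∈ 𝒜 g, ∀ b ∈ 𝒜 h, a * b ∈ 𝒜 (g * h)

namespace IsMulGraded

section Semiring

variable [Semiring A] [Algebra k A] {𝒜 : G → Submodule k A}

lemma inf_comap {B : Type*} [Semiring B] [Algebra k B] {ℬ : G → Submodule k B}
    (h𝒜 : IsMulGraded 𝒜) (hℬ : IsMulGraded ℬ) (f : A →ₐ[k] B) :
    IsMulGraded fun g => 𝒜 g ⊓ (ℬ g).comap f.toLinearMap where
  one_mem := ⟨h𝒜.one_mem, by simpa using hℬ.one_mem⟩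
  mul_mem g h a ha b hb :=
    ⟨h𝒜.mul_mem g h a ha.1 b hb.1, by simpa using hℬ.mul_mem g h _ ha.2 _ hb.2⟩

lemma iSup_mul_iSup_le (h𝒜 : IsMulGraded 𝒜) : (⨆ g, 𝒜 g) * (⨆ g, 𝒜 g) ≤ ⨆ g, 𝒜 g := by
  simp only [Submodule.iSup_mul, Submodule.mul_iSup]
  exact iSup₂_le fun g h => (Submodule.mul_le.2 (h𝒜.mul_mem _ _)).trans (le_iSup 𝒜 _)

lemma iSup_eq_top_of_adjoin_eq_top (h𝒜 : IsMulGraded 𝒜) {s : Set A}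
    (hs : Algebra.adjoin k s = ⊤) (hs𝒜 : ∀ a ∈ s, a ∈ ⨆ g, 𝒜 g) : ⨆ g, 𝒜 g = ⊤ := by
  have adjoin_le : Algebra.adjoin k s ≤ (⨆ g, 𝒜 g).toSubalgebra
      (Submodule.mem_iSup_of_mem 1 h𝒜.one_mem)
      (fun _ _ ha hb => h𝒜.iSup_mul_iSup_le (Submodule.mul_mem_mul ha hb)) :=
    Algebra.adjoin_le hs𝒜
  rw [hs] at adjoin_le
  exact eq_top_iff.2 fun a _ => adjoin_le Algebra.mem_top

end Semiring

lemma algHom_apply_mem {k A B : Type*} [CommRing k] [Ring A] [Algebra k A] [Semiring B]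
    [Algebra k B] {𝒜 : G → Submodule k A} {ℬ : G → Submodule k B} (h𝒜 : IsMulGraded 𝒜)
    (hindep : iSupIndep 𝒜) (hℬ : IsMulGraded ℬ) (f : A →ₐ[k] B) {s : Set A}
    (hs : Algebra.adjoin k s = ⊤) (hsf : ∀ a ∈ s, a ∈ ⨆ g, 𝒜 g ⊓ (ℬ g).comap f.toLinearMap)
    (g : G) (a : A) (ha : a ∈ 𝒜 g) : f a ∈ ℬ g := by
  have iSup_eq := (h𝒜.inf_comap hℬ f).iSup_eq_top_of_adjoin_eq_top hs hsf
  have inf_eq := (hindep.le_iff_eq_of_iSup_eq_top iSup_eq).1 fun _ => inf_le_left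
  rw [← inf_eq] at ha
  exact ha.2

end IsMulGraded

end MulGraded

section Coaction

variable {k G A : Type*} [Monoid G] [CommSemiring k] [Semiring A] [Algebra k A]

/-- The family of submodules `{a | ρ a = a ⊗ g}` attached to an algebra morphism `ρ : A → A[G]`.
When `ρ` is a coaction of the bialgebra `k[G]` this is the corresponding `G`-grading of `A`; the
coaction axioms are not assumed. -/
noncomputable def coactionGrading (ρ : A →ₐ[k] MonoidAlgebra A G) (g : G) : Submodule k A :=
  LinearMap.eqLocus ρ.toLinearMap (MonoidAlgebra.lsingle g)

variable (ρ : A →ₐ[k] MonoidAlgebra A G)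

lemma mem_coactionGrading {g : G} {a : A} :
    a ∈ coactionGrading ρ g ↔ ρ a = MonoidAlgebra.single g a :=
  Iff.rfl

lemma isMulGraded_coactionGrading : IsMulGraded (coactionGrading ρ) where
  one_mem := by rw [mem_coactionGrading, map_one, MonoidAlgebra.one_def]
  mul_mem g h a ha b hb := by
    rw [mem_coactionGrading] at ha hb ⊢
    rw [map_mul, ha, hb, MonoidAlgebra.single_mul_single]

lemma iSupIndep_coactionGrading : iSupIndep (coactionGrading ρ) := by
  intro g
  let proj : A →ₗ[k] A :=
    Finsupp.lapply g ∘ₗ (MonoidAlgebra.coeffLinearEquiv k).toLinearMap ∘ₗ ρ.toLinearMap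
  have proj_eq {h : G} {a : A} (ha : ρ a = MonoidAlgebra.single h a) :
      proj a = Finsupp.single h a g := by
    change (ρ a).coeff g = _
    rw [ha, MonoidAlgebra.coeff_single]
  have le_ker : ⨆ (h) (_ : h ≠ g), coactionGrading ρ h ≤ LinearMap.ker proj :=
    iSup₂_le fun h hne a ha => (proj_eq ha).trans (Finsupp.single_eq_of_ne' hne)
  refine Submodule.disjoint_def.2 fun a ha ha' => ?_
  calc a = proj a := by rw [proj_eq ha, Finsupp.single_eq_same]
    _ = 0 := le_ker ha'

end Coaction

section InternalDirectSum

variable {ι R M N : Type*} [Semiring R] [AddCommMonoid M] [Module R M] [AddCommMonoid N]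
  [Module R N] {p : ι → Submodule R M}

lemma exists_linearMap_of_isInternal [DecidableEq ι] (hp : DirectSum.IsInternal p)
    (φ : ∀ i, p i →ₗ[R] N) : ∃ f : M →ₗ[R] N, ∀ i (m : p i), f m = φ i m := by
  let _ := hp.chooseDecomposition
  exact ⟨DirectSum.toModule R ι N φ ∘ₗ (DirectSum.decomposeLinearEquiv p).toLinearMap,
    fun i m => by simp⟩

lemma apply_mem_iSup_of_iSup_eq_top {q : ι → Submodule R N} (hp : ⨆ i, p i = ⊤) (f : M →ₗ[R] N)
    (hf : ∀ i, ∀ m ∈ p i, f m ∈ q i) (m : M) : f m ∈ ⨆ i, q i := by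
  have iSup_le_comap : ⨆ i, p i ≤ (⨆ i, q i).comap f :=
    iSup_le fun i m hm => Submodule.mem_iSup_of_mem i (hf i m hm)
  exact iSup_le_comap (hp ▸ Submodule.mem_top)

end InternalDirectSum

lemma map_lie_of_iSup_eq_top {ι R L L' : Type*} [CommRing R] [LieRing L] [LieAlgebra R L]
    [LieRing L'] [LieAlgebra R L'] {p : ι → Submodule R L} (hp : ⨆ i, p i = ⊤) (f : L →ₗ[R] L')
    (hf : ∀ i j, ∀ a ∈ p i, ∀ b ∈ p j, f ⁅a, b⁆ = ⁅f a, f b⁆) (a b : L) :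
    f ⁅a, b⁆ = ⁅f a, f b⁆ := by
  have mem_iSup (c : L) : c ∈ ⨆ i, p i := hp ▸ Submodule.mem_top
  induction mem_iSup a using Submodule.iSup_induction' with
  | zero => simp
  | add a a' _ _ ha ha' => simp only [add_lie, map_add, ha, ha']
  | mem i a ha =>
    induction mem_iSup b using Submodule.iSup_induction' with
    | zero => simp
    | add b b' _ _ hb hb' => simp only [lie_add, map_add, hb, hb']
    | mem j b hb => exact hf i j a ha b hb

section Enveloping

attribute [local instance] LieRing.ofAssociativeRing

open scoped Function

variable {k : Type u} {G : Type v} {L : Type w} [CommRing k] [Monoid G] [LieRing L] [LieAlgebra k L]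

/-- `IsBracketComponent ℒ a b c` says that `a` and `b` are homogeneous of degrees `g` and `h` with
`g * h ≠ h * g`, and that `c` is the component of `⁅a, b⁆` in degree `g * h`, the remaining part
`⁅a, b⁆ - c` having degree `h * g`. -/
def IsBracketComponent (ℒ : G → Submodule k L) (a b c : L) : Prop :=
  ∃ g h, g * h ≠ h * g ∧ a ∈ ℒ g ∧ b ∈ ℒ h ∧ c ∈ ℒ (g * h) ∧ ⁅a, b⁆ - c ∈ ℒ (h * g)

lemma IsBracketComponent.symm {ℒ : G → Submodule k L} {a b c : L}
    (hc : IsBracketComponent ℒ a b c) : IsBracketComponent ℒ b a (c - ⁅a, b⁆) := by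
  obtain ⟨g, h, hgh, ha, hb, hc, hd⟩ := hc
  refine ⟨h, g, hgh.symm, hb, ha, ?_, ?_⟩
  · simpa using neg_mem hd
  · rw [← lie_skew b a, neg_sub_left, sub_add_cancel]
    exact neg_mem hc

/-- A Lie morphism into an associative algebra respects bracket components when it turns the
degree `g * h` component of `⁅a, b⁆` into the product of the images of `a` and `b`. These are the
morphisms that the graded enveloping algebra classifies. -/
def RespectsBracketComponents (ℒ : G → Submodule k L) {A : Type*} [Ring A] [Algebra k A]
    (j : L →ₗ⁅k⁆ A) : Prop :=
  ∀ ⦃a b c : L⦄, IsBracketComponent ℒ a b c → j a * j b = j c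

lemma respectsBracketComponents_of_graded {ℒ : G → Submodule k L} {A : Type*} [Ring A]
    [Algebra k A] {𝒜 : G → Submodule k A} (h𝒜 : IsMulGraded 𝒜)
    (hdisj : Pairwise (Disjoint on 𝒜)) {j : L →ₗ⁅k⁆ A}
    (hj : ∀ g, ∀ l ∈ ℒ g, j l ∈ 𝒜 g) : RespectsBracketComponents ℒ j := by
  rintro a b c ⟨g, h, hgh, ha, hb, hc, hd⟩
  have left_mem : j a * j b - j c ∈ 𝒜 (g * h) :=
    sub_mem (h𝒜.mul_mem g h _ (hj g a ha) _ (hj h b hb)) (hj _ c hc)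
  have eq_right : j a * j b - j c = j (⁅a, b⁆ - c) + j b * j a := by
    rw [map_sub, LieHom.map_lie, LieRing.of_associative_ring_bracket]
    abel
  have right_mem : j a * j b - j c ∈ 𝒜 (h * g) :=
    eq_right ▸ add_mem (hj _ _ hd) (h𝒜.mul_mem h g _ (hj h b hb) _ (hj g a ha))
  exact sub_eq_zero.1 (Submodule.disjoint_def.1 (hdisj hgh) _ left_mem right_mem)

namespace RespectsBracketComponents

variable {ℒ : G → Submodule k L} {A : Type*} [Ring A] [Algebra k A] {j : L →ₗ⁅k⁆ A}

lemma exists_lieHom_single [DecidableEq G] (hℒ : DirectSum.IsInternal ℒ)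
    (hbr : ∀ g h : G, ∀ a ∈ ℒ g, ∀ b ∈ ℒ h, ⁅a, b⁆ ∈ ℒ (g * h) ⊔ ℒ (h * g))
    (hj : RespectsBracketComponents ℒ j) :
    ∃ δ : L →ₗ⁅k⁆ MonoidAlgebra A G, ∀ g, ∀ l ∈ ℒ g, δ l = MonoidAlgebra.single g (j l) := by
  obtain ⟨δ, hδ⟩ := exists_linearMap_of_isInternal hℒ fun g =>
    MonoidAlgebra.lsingle g ∘ₗ (j : L →ₗ[k] A) ∘ₗ (ℒ g).subtype
  replace hδ (g : G) (l : L) (hl : l ∈ ℒ g) : δ l = MonoidAlgebra.single g (j l) := hδ g ⟨l, hl⟩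
  refine ⟨{ δ with map_lie' := map_lie_of_iSup_eq_top hℒ.submodule_iSup_eq_top δ ?_ _ _ }, hδ⟩
  intro g h a ha b hb
  rw [hδ g a ha, hδ h b hb, LieRing.of_associative_ring_bracket,
    MonoidAlgebra.single_mul_single, MonoidAlgebra.single_mul_single]
  by_cases hgh : g * h = h * g
  · have hab : ⁅a, b⁆ ∈ ℒ (g * h) := by simpa [hgh] using hbr g h a ha b hb
    rw [hδ _ _ hab, LieHom.map_lie, LieRing.of_associative_ring_bracket, ← hgh,
      MonoidAlgebra.single_sub]
  · obtain ⟨c, hc, d, hd, hcd⟩ := Submodule.mem_sup.1 (hbr g h a ha b hb)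
    have hab : IsBracketComponent ℒ a b c := ⟨g, h, hgh, ha, hb, hc, by simpa [← hcd] using hd⟩
    rw [hj hab, hj hab.symm, ← hcd, sub_add_cancel_left, map_neg, map_add, hδ _ c hc, hδ _ d hd,
      MonoidAlgebra.single_neg, sub_neg_eq_add]

lemma of_apply_eq_single {δ : L →ₗ⁅k⁆ MonoidAlgebra A G} (hj : RespectsBracketComponents ℒ j)
    (hδ : ∀ g, ∀ l ∈ ℒ g, δ l = MonoidAlgebra.single g (j l)) : RespectsBracketComponents ℒ δ := by
  intro a b c hc
  have mul_eq := hj hc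
  obtain ⟨g, h, -, ha, hb, hc, -⟩ := hc
  rw [hδ g a ha, hδ h b hb, hδ _ c hc, MonoidAlgebra.single_mul_single, mul_eq]

end RespectsBracketComponents

/-- The relations `a * b = c` imposed on the ordinary enveloping algebra, one for each bracket
component `c` of homogeneous `a` and `b`. -/
inductive GradedEnvelopingRel (ℒ : G → Submodule k L) :
    UniversalEnvelopingAlgebra k L → UniversalEnvelopingAlgebra k L → Prop
  | of {a b c : L} (hc : IsBracketComponent ℒ a b c) : GradedEnvelopingRel ℒ
      (UniversalEnvelopingAlgebra.ι k a * UniversalEnvelopingAlgebra.ι k b)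
      (UniversalEnvelopingAlgebra.ι k c)

/-- The algebra underlying the universal graded enveloping algebra, as a quotient of the ordinary
one. -/
abbrev GradedEnvelopingAlgebra (ℒ : G → Submodule k L) : Type (max u w) :=
  RingQuot (GradedEnvelopingRel ℒ)

namespace GradedEnvelopingAlgebra

/-- The canonical Lie morphism. -/
noncomputable def ι (ℒ : G → Submodule k L) : L →ₗ⁅k⁆ GradedEnvelopingAlgebra ℒ :=
  (RingQuot.mkAlgHom k (GradedEnvelopingRel ℒ)).toLieHom.comp (UniversalEnvelopingAlgebra.ι k)

variable {ℒ : G → Submodule k L} {A : Type*} [Ring A] [Algebra k A] {j : L →ₗ⁅k⁆ A}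

lemma respectsBracketComponents_ι : RespectsBracketComponents ℒ (ι ℒ) := fun _ _ _ hc =>
  (map_mul (RingQuot.mkAlgHom k (GradedEnvelopingRel ℒ)) _ _).symm.trans
    (RingQuot.mkAlgHom_rel k (.of hc))

/-- The universal property of `GradedEnvelopingAlgebra`, without reference to gradings. -/
noncomputable def lift (hj : RespectsBracketComponents ℒ j) : GradedEnvelopingAlgebra ℒ →ₐ[k] A :=
  RingQuot.liftAlgHom k ⟨UniversalEnvelopingAlgebra.lift k j, by
    rintro _ _ ⟨hc⟩
    simp only [map_mul, UniversalEnvelopingAlgebra.lift_ι_apply, hj hc]⟩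

lemma lift_ι (hj : RespectsBracketComponents ℒ j) (l : L) : lift hj (ι ℒ l) = j l :=
  (RingQuot.liftAlgHom_mkAlgHom_apply _ _ _ _).trans (UniversalEnvelopingAlgebra.lift_ι_apply k j l)

lemma hom_ext {f f' : GradedEnvelopingAlgebra ℒ →ₐ[k] A} (h : ∀ l, f (ι ℒ l) = f' (ι ℒ l)) :
    f = f' :=
  RingQuot.ringQuot_ext' k f f' (UniversalEnvelopingAlgebra.hom_ext k (LieHom.ext h))

lemma adjoin_range_ι : Algebra.adjoin k (Set.range (ι ℒ)) = ⊤ := by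
  let S := Algebra.adjoin k (Set.range (ι ℒ))
  let ιS : L →ₗ⁅k⁆ S :=
    { (ι ℒ : L →ₗ[k] GradedEnvelopingAlgebra ℒ).codRestrict (Subalgebra.toSubmodule S)
        (fun l => Algebra.subset_adjoin ⟨l, rfl⟩) with
      map_lie' := Subtype.ext (LieHom.map_lie (ι ℒ) _ _) }
  have hιS : RespectsBracketComponents ℒ ιS := fun _ _ _ hc =>
    Subtype.ext (respectsBracketComponents_ι hc)
  have section_eq : S.val.comp (lift hιS) = AlgHom.id k _ :=
    hom_ext fun l => congrArg Subtype.val (lift_ι hιS l)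
  refine eq_top_iff.2 fun u _ => ?_
  rw [← AlgHom.id_apply (R := k) u, ← section_eq]
  exact (lift hιS u).2

lemma exists_coaction [DecidableEq G] (hℒ : DirectSum.IsInternal ℒ)
    (hbr : ∀ g h : G, ∀ a ∈ ℒ g, ∀ b ∈ ℒ h, ⁅a, b⁆ ∈ ℒ (g * h) ⊔ ℒ (h * g)) :
    ∃ ρ : GradedEnvelopingAlgebra ℒ →ₐ[k] MonoidAlgebra (GradedEnvelopingAlgebra ℒ) G,
      ∀ g, ∀ l ∈ ℒ g, ι ℒ l ∈ coactionGrading ρ g := by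
  obtain ⟨δ, hδ⟩ := respectsBracketComponents_ι.exists_lieHom_single hℒ hbr
  exact ⟨lift (respectsBracketComponents_ι.of_apply_eq_single hδ), fun g l hl =>
    (lift_ι _ l).trans (hδ g l hl)⟩

end GradedEnvelopingAlgebra

open GradedEnvelopingAlgebra in
theorem exists_universal_graded_enveloping_algebra_of_field_general
    {k : Type u} {G : Type v} {L : Type w}
    [CommRing k] [Monoid G] [DecidableEq G] [LieRing L] [LieAlgebra k L]
    (ℒ : G → Submodule k L) (hℒ : DirectSum.IsInternal ℒ)
    (hbr : ∀ g h : G, ∀ a ∈ ℒ g, ∀ b ∈ ℒ h, ⁅a, b⁆ ∈ ℒ (g * h) ⊔ ℒ (h * g)) :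
    ∃ (U : Type (max u w)) (_ : Ring U) (_ : Algebra k U) (𝒰 : G → Submodule k U) (i : L →ₗ⁅k⁆ U),
      DirectSum.IsInternal 𝒰 ∧ IsMulGraded 𝒰 ∧ (∀ g, ∀ l ∈ ℒ g, i l ∈ 𝒰 g) ∧
      ∀ (A : Type x) [Ring A] [Algebra k A] (𝒜 : G → Submodule k A),
        Pairwise (Disjoint on 𝒜) → IsMulGraded 𝒜 →
        ∀ j : L →ₗ⁅k⁆ A, (∀ g, ∀ l ∈ ℒ g, j l ∈ 𝒜 g) →
        ∃! f : U →ₐ[k] A, (∀ g, ∀ u ∈ 𝒰 g, f u ∈ 𝒜 g) ∧ ∀ l, f (i l) = j l := by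
  obtain ⟨ρ, hρ⟩ := exists_coaction hℒ hbr
  have hmul := isMulGraded_coactionGrading ρ
  have hindep := iSupIndep_coactionGrading ρ
  have mem_iSup {𝒰 : G → Submodule k (GradedEnvelopingAlgebra ℒ)}
      (h : ∀ g, ∀ l ∈ ℒ g, ι ℒ l ∈ 𝒰 g) : ∀ u ∈ Set.range (ι ℒ), u ∈ ⨆ g, 𝒰 g :=
    Set.forall_mem_range.2 (apply_mem_iSup_of_iSup_eq_top hℒ.submodule_iSup_eq_top
      (ι ℒ : L →ₗ[k] GradedEnvelopingAlgebra ℒ) h)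
  have hinternal := DirectSum.isInternal_submodule_of_iSupIndep_of_iSup_eq_top hindep
    (hmul.iSup_eq_top_of_adjoin_eq_top adjoin_range_ι (mem_iSup hρ))
  refine ⟨GradedEnvelopingAlgebra ℒ, inferInstance, inferInstance, coactionGrading ρ, ι ℒ,
    hinternal, hmul, hρ, fun A _ _ 𝒜 hdisj h𝒜 j hj => ?_⟩
  have hrespects := respectsBracketComponents_of_graded h𝒜 hdisj hj
  have lift_mem := hmul.algHom_apply_mem hindep h𝒜 (lift hrespects) adjoin_range_ι
    (mem_iSup fun g l hl => ⟨hρ g l hl, by simpa [lift_ι] using hj g l hl⟩)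
  exact ⟨lift hrespects, ⟨lift_mem, lift_ι hrespects⟩,
    fun f hf => hom_ext fun l => (hf.2 l).trans (lift_ι hrespects l).symm⟩

end Enveloping

/-- Every noncommutatively `G`-graded Lie algebra over a field has a universal
`G`-graded enveloping algebra. -/
theorem exists_universal_graded_enveloping_algebra_of_field
    {k : Type u} {G : Type v} {L : Type w}
    [Field k] [Group G] [DecidableEq G] [LieRing L] [LieAlgebra k L]
    (ℒ : G → Submodule k L)
    (hdecomp : DirectSum.IsInternal ℒ)
    (hbr : ∀ g h : G, ∀ a ∈ ℒ g, ∀ b ∈ ℒ h, ⁅a, b⁆ ∈ ℒ (g * h) ⊔ ℒ (h * g)) :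
    ∃ (U : GradedAlg.{u, v, max u w} k G) (i : L →ₗ[k] U.carrier),
      (∀ a b : L, i ⁅a, b⁆ = i a * i b - i b * i a) ∧
      (∀ g : G, ∀ l ∈ ℒ g, i l ∈ U.grading g) ∧
      ∀ (A : GradedAlg.{u, v, x} k G) (j : L →ₗ[k] A.carrier),
        (∀ a b : L, j ⁅a, b⁆ = j a * j b - j b * j a) →
        (∀ g : G, ∀ l ∈ ℒ g, j l ∈ A.grading g) →
        ∃! km : U.carrier →ₐ[k] A.carrier,
          (∀ g : G, ∀ u ∈ U.grading g, km u ∈ A.grading g) ∧ ∀ l : L, km (i l) = j l := by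
  obtain ⟨U, _, _, 𝒰, i, h𝒰, hmul, hi, hU⟩ :=
    exists_universal_graded_enveloping_algebra_of_field_general ℒ hdecomp hbr
  let _ := LieRing.ofAssociativeRing (A := U)
  refine ⟨⟨U, 𝒰, h𝒰, hmul.one_mem, hmul.mul_mem⟩, i, i.map_lie, hi, fun A j hj => ?_⟩
  let _ := LieRing.ofAssociativeRing (A := A.carrier)
  exact hU A.carrier A.grading A.internal.submodule_iSupIndep.pairwiseDisjoint
    ⟨A.one_mem, A.mul_mem⟩ { j with map_lie' := hj _ _ }
end

section
/- Every inverse limit exists in the category of noncommutatively G-graded R-algebras: given an inverse system (A_α, f_{αβ}) of noncommutatively G-graded R-algebras over a preordered index set, the subalgebra Q' = ⊕_{g ∈ G} Q'_g of the product, where Q'_g consists of compatible tuples x with p_α(x) ∈ (A_α)_g for all α, is a noncommutatively G-graded R-algebra and is an inverse limit in this category. -/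
universe u v w x

/-- A noncommutatively `G`-graded `R`-algebra. -/
structure NCGradedAlg (R : Type u) (G : Type v) [CommRing R] [Group G] [DecidableEq G] where
  carrier : Type x
  [ring : Ring carrier]
  [alg : Algebra R carrier]
  grading : G → Submodule R carrier
  internal : DirectSum.IsInternal grading
  mul_mem : ∀ g h : G, ∀ a ∈ grading g, ∀ b ∈ grading h,
    a * b ∈ grading (g * h) ⊔ grading (h * g)

attribute [instance] NCGradedAlg.ring NCGradedAlg.alg

/-- The degree-`g` component `Q'_g` of the inverse limit: compatible tuples all of whose
components are homogeneous of degree `g`. -/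
def limGrading {R G ι : Type*} [CommRing R] [Group G] [Preorder ι]
    {A : ι → Type*} [∀ α, Ring (A α)] [∀ α, Algebra R (A α)]
    (𝒜 : ∀ α, G → Submodule R (A α))
    (f : ∀ α β, α ≤ β → (A β →ₐ[R] A α)) : G → Submodule R (∀ α, A α) := fun g =>
  (⨅ α, (𝒜 α g).comap (LinearMap.proj α : (∀ α, A α) →ₗ[R] A α)) ⊓
    (⨅ (α) (β) (h : α ≤ β),
      LinearMap.ker ((LinearMap.proj α : (∀ α, A α) →ₗ[R] A α) -
        (f α β h).toLinearMap ∘ₗ (LinearMap.proj β : (∀ α, A α) →ₗ[R] A β)))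

/-!
Compatible tuples form a subalgebra of the product, so a product of compatible homogeneous tuples
is compatible, and each of its entries lies in `A_{gh} + A_{hg}`. When `gh ≠ hg` the sum is direct,
so every entry splits uniquely; the connecting maps preserve degrees, hence carry the splitting
over `β` to the splitting over `α`, and the two families of summands are themselves compatible.
Independence is checked entrywise, and a cone factors only through the tuple of its legs.
-/

theorem eq_and_eq_of_add_eq_add_of_disjoint {R M : Type*} [Ring R] [AddCommGroup M] [Module R M]
    {p q : Submodule R M} (hpq : Disjoint p q) {a a' b b' : M} (ha : a ∈ p) (ha' : a' ∈ p)
    (hb : b ∈ q) (hb' : b' ∈ q) (h : a + b = a' + b') : a = a' ∧ b = b' := by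
  have hdisj : Disjoint p.toAddSubgroup q.toAddSubgroup :=
    AddSubgroup.disjoint_def.mpr (Submodule.disjoint_def.mp hpq _)
  have heq := @AddSubgroup.add_injective_of_disjoint _ _ _ _ hdisj
    (⟨a, ha⟩, ⟨b, hb⟩) (⟨a', ha'⟩, ⟨b', hb'⟩) h
  simpa using heq

theorem iSupIndep_submodule_pi {R κ ι : Type*} {M : ι → Type*} [Semiring R]
    [∀ α, AddCommMonoid (M α)] [∀ α, Module R (M α)] {p : ∀ α, κ → Submodule R (M α)}
    (hp : ∀ α, iSupIndep (p α)) : iSupIndep fun k ↦ Submodule.pi Set.univ fun α ↦ p α k := by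
  intro k
  rw [Submodule.disjoint_def]
  intro x hxk hx
  funext α
  have hle : ⨆ (j) (_ : j ≠ k), Submodule.pi Set.univ (fun α ↦ p α j) ≤
      (⨆ (j) (_ : j ≠ k), p α j).comap (LinearMap.proj α) :=
    iSup₂_le fun j hj y hy ↦ le_iSup₂ (f := fun j (_ : j ≠ k) ↦ p α j) j hj (hy α trivial)
  exact Submodule.disjoint_def.mp (hp α k) _ (hxk α trivial) (hle hx)

section CompatibleSubalgebra

variable {R ι : Type*} [CommSemiring R] [LE ι] {A : ι → Type*}
  [∀ α, Semiring (A α)] [∀ α, Algebra R (A α)]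

/-- The inverse limit of the underlying ungraded `R`-algebras, realised as the subalgebra of
compatible tuples in the product. -/
def compatibleSubalgebra (f : ∀ α β, α ≤ β → (A β →ₐ[R] A α)) : Subalgebra R (∀ α, A α) :=
  ⨅ (α) (β) (h : α ≤ β),
    AlgHom.equalizer (Pi.evalAlgHom R A α) ((f α β h).comp (Pi.evalAlgHom R A β))

theorem mem_compatibleSubalgebra {f : ∀ α β, α ≤ β → (A β →ₐ[R] A α)} {x : ∀ α, A α} :
    x ∈ compatibleSubalgebra f ↔ ∀ α β (h : α ≤ β), x α = f α β h (x β) := by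
  simp [compatibleSubalgebra, Algebra.mem_iInf]

end CompatibleSubalgebra

theorem pi_sup_inf_compatibleSubalgebra_le {R ι : Type*} [CommRing R] [LE ι] {A : ι → Type*}
    [∀ α, Ring (A α)] [∀ α, Algebra R (A α)] {f : ∀ α β, α ≤ β → (A β →ₐ[R] A α)}
    {p q : ∀ α, Submodule R (A α)} (hpq : ∀ α, Disjoint (p α) (q α))
    (hp : ∀ α β (h : α ≤ β), ∀ x ∈ p β, f α β h x ∈ p α)
    (hq : ∀ α β (h : α ≤ β), ∀ x ∈ q β, f α β h x ∈ q α) :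
    Submodule.pi Set.univ (fun α ↦ p α ⊔ q α) ⊓ (compatibleSubalgebra f).toSubmodule ≤
      Submodule.pi Set.univ p ⊓ (compatibleSubalgebra f).toSubmodule ⊔
        Submodule.pi Set.univ q ⊓ (compatibleSubalgebra f).toSubmodule := by
  rintro x ⟨hxpq, hxf⟩
  choose a ha b hb hab using fun α ↦ Submodule.mem_sup.mp (hxpq α trivial)
  have hcompat : ∀ α β (h : α ≤ β), a α = f α β h (a β) ∧ b α = f α β h (b β) := by
    intro α β h
    have hsum : a α + b α = f α β h (a β) + f α β h (b β) := by
      rw [← map_add, hab, hab, mem_compatibleSubalgebra.mp hxf α β h]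
    exact eq_and_eq_of_add_eq_add_of_disjoint (hpq α) (ha α) (hp α β h _ (ha β))
      (hb α) (hq α β h _ (hb β)) hsum
  exact Submodule.mem_sup.mpr
    ⟨a, ⟨fun α _ ↦ ha α, mem_compatibleSubalgebra.mpr fun α β h ↦ (hcompat α β h).1⟩,
      b, ⟨fun α _ ↦ hb α, mem_compatibleSubalgebra.mpr fun α β h ↦ (hcompat α β h).2⟩,
      funext hab⟩

section LimGrading

variable {R G ι : Type*} [CommRing R] [Group G] [Preorder ι] {A : ι → Type*}
  [∀ α, Ring (A α)] [∀ α, Algebra R (A α)] {𝒜 : ∀ α, G → Submodule R (A α)}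
  {f : ∀ α β, α ≤ β → (A β →ₐ[R] A α)}

theorem limGrading_eq_pi_inf_compatibleSubalgebra (g : G) :
    limGrading 𝒜 f g =
      Submodule.pi Set.univ (fun α ↦ 𝒜 α g) ⊓ (compatibleSubalgebra f).toSubmodule := by
  ext x
  simp [limGrading, mem_compatibleSubalgebra, sub_eq_zero]

theorem mem_limGrading {g : G} {x : ∀ α, A α} :
    x ∈ limGrading 𝒜 f g ↔
      (∀ α, x α ∈ 𝒜 α g) ∧ ∀ α β (h : α ≤ β), x α = f α β h (x β) := by
  simp [limGrading_eq_pi_inf_compatibleSubalgebra, mem_compatibleSubalgebra]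

theorem iSupIndep_limGrading (hind : ∀ α, iSupIndep (𝒜 α)) : iSupIndep (limGrading 𝒜 f) :=
  (iSupIndep_submodule_pi hind).mono fun g ↦
    (limGrading_eq_pi_inf_compatibleSubalgebra g).trans_le inf_le_left

theorem mem_limGrading_sup (hdisj : ∀ α, Pairwise (Function.onFun Disjoint (𝒜 α)))
    (hfgr : ∀ α β (h : α ≤ β) (g : G), ∀ x ∈ 𝒜 β g, f α β h x ∈ 𝒜 α g) {k l : G}
    {x : ∀ α, A α} (hx : ∀ α, x α ∈ 𝒜 α k ⊔ 𝒜 α l) (hxf : x ∈ compatibleSubalgebra f) :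
    x ∈ limGrading 𝒜 f k ⊔ limGrading 𝒜 f l := by
  simp only [limGrading_eq_pi_inf_compatibleSubalgebra]
  obtain rfl | hkl := eq_or_ne k l
  · simp only [sup_idem] at hx ⊢
    exact ⟨fun α _ ↦ hx α, hxf⟩
  · exact pi_sup_inf_compatibleSubalgebra_le (fun α ↦ hdisj α hkl)
      (fun α β h ↦ hfgr α β h k) (fun α β h ↦ hfgr α β h l) ⟨fun α _ ↦ hx α, hxf⟩

theorem mul_mem_limGrading_sup (hdisj : ∀ α, Pairwise (Function.onFun Disjoint (𝒜 α)))
    (hfgr : ∀ α β (h : α ≤ β) (g : G), ∀ x ∈ 𝒜 β g, f α β h x ∈ 𝒜 α g) {g h : G}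
    (hmul : ∀ α, ∀ a ∈ 𝒜 α g, ∀ b ∈ 𝒜 α h, a * b ∈ 𝒜 α (g * h) ⊔ 𝒜 α (h * g))
    {x y : ∀ α, A α} (hx : x ∈ limGrading 𝒜 f g) (hy : y ∈ limGrading 𝒜 f h) :
    x * y ∈ limGrading 𝒜 f (g * h) ⊔ limGrading 𝒜 f (h * g) := by
  rw [mem_limGrading, ← mem_compatibleSubalgebra] at hx hy
  exact mem_limGrading_sup hdisj hfgr (fun α ↦ hmul α _ (hx.1 α) _ (hy.1 α)) (mul_mem hx.2 hy.2)

theorem existsUnique_algHom_limGrading {F : Type*} [Semiring F] [Algebra R F]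
    {ℱ : G → Submodule R F} (u : ∀ α, F →ₐ[R] A α)
    (hu : ∀ α (g : G), ∀ y ∈ ℱ g, u α y ∈ 𝒜 α g)
    (huf : ∀ α β (h : α ≤ β), ∀ y, f α β h (u β y) = u α y) :
    ∃! v : F →ₐ[R] (∀ α, A α),
      (∀ g : G, ∀ y ∈ ℱ g, v y ∈ limGrading 𝒜 f g) ∧ ∀ α y, v y α = u α y := by
  refine ⟨AlgHom.pi u, ⟨fun g y hy ↦ ?_, fun _ _ ↦ rfl⟩, ?_⟩
  · exact mem_limGrading.mpr ⟨fun α ↦ hu α g y hy, fun α β h ↦ (huf α β h y).symm⟩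
  · rintro v ⟨-, hv⟩
    ext y α
    exact hv α y

end LimGrading

theorem inverse_limit_exists_general {R G ι : Type*} [CommRing R] [Group G] [Preorder ι]
    {A : ι → Type*} [∀ α, Ring (A α)] [∀ α, Algebra R (A α)]
    (𝒜 : ∀ α, G → Submodule R (A α)) (hind : ∀ α, iSupIndep (𝒜 α))
    (hmul : ∀ α, ∀ g h : G, ∀ a ∈ 𝒜 α g, ∀ b ∈ 𝒜 α h,
      a * b ∈ 𝒜 α (g * h) ⊔ 𝒜 α (h * g))
    (f : ∀ α β, α ≤ β → (A β →ₐ[R] A α))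
    (hfgr : ∀ α β (h : α ≤ β) (g : G), ∀ x ∈ 𝒜 β g, f α β h x ∈ 𝒜 α g) :
    (∀ g h : G, ∀ x ∈ limGrading 𝒜 f g, ∀ y ∈ limGrading 𝒜 f h,
        x * y ∈ limGrading 𝒜 f (g * h) ⊔ limGrading 𝒜 f (h * g)) ∧
    iSupIndep (limGrading 𝒜 f) ∧
    ∀ (F : Type x) [Semiring F] [Algebra R F] (ℱ : G → Submodule R F) (u : ∀ α, F →ₐ[R] A α),
      (∀ α (g : G), ∀ y ∈ ℱ g, u α y ∈ 𝒜 α g) →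
      (∀ α β (h : α ≤ β), ∀ y : F, f α β h (u β y) = u α y) →
      ∃! v : F →ₐ[R] (∀ α, A α),
        (∀ g : G, ∀ y ∈ ℱ g, v y ∈ limGrading 𝒜 f g) ∧ ∀ α (y : F), v y α = u α y :=
  ⟨fun g h _ hx _ hy ↦ mul_mem_limGrading_sup (fun α ↦ (hind α).pairwiseDisjoint) hfgr
      (fun α ↦ hmul α g h) hx hy,
    iSupIndep_limGrading hind,
    fun _ _ _ _ u hu huf ↦ existsUnique_algHom_limGrading u hu huf⟩

/-- Inverse limits exist in the category of noncommutatively `G`-graded algebras: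
given an inverse system of noncommutatively `G`-graded algebras over a preordered set,
the family `Q'_g` of homogeneous compatible tuples is independent, multiplies
noncommutatively gradedly, and `Q' = ⊕_g Q'_g` has the universal property of the
inverse limit in this category. -/
theorem inverse_limit_exists
    {R : Type u} {G : Type v} {ι : Type w} [CommRing R] [Group G] [DecidableEq G]
    [Preorder ι]
    {A : ι → Type w} [∀ α, Ring (A α)] [∀ α, Algebra R (A α)]
    (𝒜 : ∀ α, G → Submodule R (A α))
    (hdec : ∀ α, DirectSum.IsInternal (𝒜 α))
    (hmul : ∀ α, ∀ g h : G, ∀ a ∈ 𝒜 α g, ∀ b ∈ 𝒜 α h,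
      a * b ∈ 𝒜 α (g * h) ⊔ 𝒜 α (h * g))
    (f : ∀ α β, α ≤ β → (A β →ₐ[R] A α))
    (hfgr : ∀ α β (h : α ≤ β) (g : G), ∀ x ∈ 𝒜 β g, f α β h x ∈ 𝒜 α g)
    (hfcomp : ∀ α β γ (h₁ : α ≤ β) (h₂ : β ≤ γ), ∀ x : A γ,
      f α γ (h₁.trans h₂) x = f α β h₁ (f β γ h₂ x))
    (hfid : ∀ α, ∀ x : A α, f α α le_rfl x = x) :
    (∀ g h : G, ∀ x ∈ limGrading 𝒜 f g, ∀ y ∈ limGrading 𝒜 f h,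
        x * y ∈ limGrading 𝒜 f (g * h) ⊔ limGrading 𝒜 f (h * g)) ∧
    (iSupIndep (limGrading 𝒜 f)) ∧
    ∀ (F : NCGradedAlg.{u, v, x} R G) (u : ∀ α, F.carrier →ₐ[R] A α),
      (∀ α (g : G), ∀ y ∈ F.grading g, u α y ∈ 𝒜 α g) →
      (∀ α β (h : α ≤ β), ∀ y : F.carrier, f α β h (u β y) = u α y) →
      ∃! v : F.carrier →ₐ[R] (∀ α, A α),
        (∀ g : G, ∀ y ∈ F.grading g, v y ∈ limGrading 𝒜 f g) ∧
        ∀ α (y : F.carrier), v y α = u α y := by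
  obtain ⟨hlim_mul, hlim_ind, huniv⟩ :=
    inverse_limit_exists_general 𝒜 (fun α ↦ (hdec α).submodule_iSupIndep) hmul f hfgr
  exact ⟨hlim_mul, hlim_ind, fun F ↦ huniv F.carrier F.grading⟩
end
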